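/- Let O be a countable set, D a set with an adjacency relation ∼, and A : D → Δ(O) a randomized algorithm. Then A is ε-differentially private with respect to ∼ if and only if for all d1 ∼ d2 the distributions A(d1) and A(d2) are related by the ε-approximate lifting of equality, i.e. A(d1) (=)^ε A(d2). -/

import Mathlib

open scoped BigOperators

noncomputable section

/-- Mass that a (sub)distribution assigns to a set of outcomes. -/
def mass {A : Type*} (μ : A → ℝ) (E : Set A) : ℝ := ∑' a : E, μ a

/-- The ε-divergence `Δ_ε(μ1, μ2) = sup_{E ⊆ A} (μ1(E) − exp(ε)·μ2(E))`. -/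
def eDiv {A : Type*} (ε : ℝ) (μ1 μ2 : A → ℝ) : ℝ :=
  ⨆ E : Set A, (mass μ1 E - Real.exp ε * mass μ2 E)

/-- `μ` is a probability distribution: pointwise nonnegative with total mass 1. -/
def IsProb {A : Type*} (μ : A → ℝ) : Prop :=
  (∀ a, 0 ≤ μ a) ∧ (∑' a, μ a) = 1

/-- `μ` is a subdistribution: pointwise nonnegative, summable, with total mass at most 1. -/
def IsSubProb {A : Type*} (μ : A → ℝ) : Prop :=
  (∀ a, 0 ≤ μ a) ∧ Summable μ ∧ (∑' a, μ a) ≤ 1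

/-- ε-approximate lifting `μ1 (Ψ)^ε μ2` of a relation `Ψ` between two
probability distributions. -/
def Lifting {A B : Type*} (ε : ℝ) (Ψ : A → B → Prop) (μ1 : A → ℝ) (μ2 : B → ℝ) : Prop :=
  ∃ μL μR : A × B → ℝ, IsProb μL ∧ IsProb μR ∧
    (∀ a, (∑' b, μL (a, b)) = μ1 a) ∧
    (∀ b, (∑' a, μR (a, b)) = μ2 b) ∧
    (∀ p : A × B, (0 < μL p ∨ 0 < μR p) → Ψ p.1 p.2) ∧
    eDiv ε μL μR ≤ 0

/-- `A` is ε-differentially private w.r.t. the adjacency relation `adj`. -/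
def DP {D O : Type*} (ε : ℝ) (adj : D → D → Prop) (A : D → O → ℝ) : Prop :=
  ∀ d1 d2, adj d1 d2 → ∀ o, A d1 o ≤ Real.exp ε * A d2 o

/-- Monadic bind of distributions: `(bind μ f)(b) = Σ_a μ(a)·f(a)(b)`. -/
def pbind {A B : Type*} (μ : A → ℝ) (f : A → B → ℝ) : B → ℝ :=
  fun b => ∑' a, μ a * f a b

/-- Dirac (point-mass) distribution at `a`. -/
def punit {A : Type*} [DecidableEq A] (a : A) : A → ℝ :=
  fun x => if x = a then 1 else 0

/-- Pushforward of a distribution along `g`: `(map g μ)(b) = Σ_{a : g(a)=b} μ(a)`. -/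
def pmap {A B : Type*} (g : A → B) (μ : A → ℝ) : B → ℝ :=
  fun b => ∑' a : {a // g a = b}, μ (a : A)

/-- Discrete Laplace distribution with mean `v` and (inverse scale) parameter `ε`:
`dLap(v, ε)(z) = ((exp ε − 1)/(exp ε + 1))·exp(−ε·|z − v|)`. -/
def dLap (v : ℤ) (ε : ℝ) : ℤ → ℝ :=
  fun z => ((Real.exp ε - 1) / (Real.exp ε + 1)) * Real.exp (-ε * ((|z - v| : ℤ) : ℝ))

end

theorem aux_summable {A : Type*} {μ : A → ℝ} (h : IsProb μ) : Summable μ := by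
  by_contra hn
  have := h.2
  rw [tsum_eq_zero_of_not_summable hn] at this
  exact zero_ne_one this

open Classical in
theorem aux_diag_prob {O : Type*} {μ : O → ℝ} (h : IsProb μ) :
    IsProb (fun p : O × O => if p.1 = p.2 then μ p.1 else 0) := by
  refine ⟨fun p => ?_, ?_⟩
  · dsimp only
    split_ifs
    · exact h.1 _
    · exact le_rfl
  · have hinj : Function.Injective (fun o : O => (o, o)) := fun a b hab => (Prod.ext_iff.1 hab).1
    have := hinj.tsum_eq (f := fun p : O × O => if p.1 = p.2 then μ p.1 else 0) (by
      rintro ⟨a, b⟩ hp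
      by_cases hab : a = b
      · exact ⟨a, by simp [hab]⟩
      · simp [hab] at hp)
    rw [← this]
    simpa using h.2

theorem aux_bdd {A : Type*} (ε : ℝ) {μ ν : A → ℝ} (h : IsProb μ) (h' : IsProb ν) :
    BddAbove (Set.range fun E : Set A => mass μ E - Real.exp ε * mass ν E) := by
  refine ⟨1, ?_⟩
  rintro _ ⟨E, rfl⟩
  have h1 : mass μ E ≤ 1 := by
    rw [← h.2]
    exact (aux_summable h).tsum_subtype_le μ E h.1
  have h2 : 0 ≤ mass ν E := tsum_nonneg fun a => h'.1 _
  have := mul_nonneg (Real.exp_pos ε).le h2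
  dsimp only
  linarith

/-- `A` is ε-differentially private w.r.t. `∼` iff for all adjacent `d1 ∼ d2`,
`A d1 (=)^ε A d2`. -/
theorem dp_iff_lifting_eq {D O : Type*} [Countable O] (ε : ℝ) (hε : 0 ≤ ε)
    (adj : D → D → Prop) (A : D → O → ℝ) (hA : ∀ d, IsProb (A d)) :
    DP ε adj A ↔ ∀ d1 d2, adj d1 d2 → Lifting ε (fun a b => a = b) (A d1) (A d2) := by
  classical
  constructor
  · intro h d1 d2 hd
    have P1 := aux_diag_prob (hA d1)
    have P2 := aux_diag_prob (hA d2)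
    refine ⟨fun p => if p.1 = p.2 then A d1 p.1 else 0,
      fun p => if p.1 = p.2 then A d2 p.1 else 0, ?_, ?_, ?_, ?_, ?_, ?_⟩
    · convert P1
    · convert P2
    · intro a
      rw [tsum_eq_single a]
      · simp
      · intro b hb
        simp [hb.symm]
    · intro a
      rw [tsum_eq_single a]
      · simp
      · intro b hb
        simp [hb]
    · intro p hp
      by_contra hne
      simp [hne] at hp
    · refine Real.iSup_le (fun E => ?_) le_rfl
      rw [sub_nonpos]
      unfold mass
      rw [← tsum_mul_left]
      refine Summable.tsum_le_tsum ?_ ?_ ?_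
      · intro p
        dsimp only
        split_ifs
        · exact h d1 d2 hd _
        · simp
      · exact (aux_summable P1).subtype E
      · refine Summable.mul_left _ ?_
        exact (aux_summable P2).subtype E
  · intro h d1 d2 hd o
    obtain ⟨L, R, hL, hR, m1, m2, hs, hdiv⟩ := h d1 d2 hd
    have e1 : A d1 o = L (o, o) := by
      rw [← m1, tsum_eq_single o]
      intro b hb
      by_contra hne
      exact hb (hs (o, b) (Or.inl (lt_of_le_of_ne (hL.1 _) (Ne.symm hne)))).symm
    have e2 : A d2 o = R (o, o) := by
      rw [← m2, tsum_eq_single o]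
      intro b hb
      by_contra hne
      exact hb (hs (b, o) (Or.inr (lt_of_le_of_ne (hR.1 _) (Ne.symm hne))))
    have := (le_ciSup (aux_bdd ε hL hR) {(o, o)}).trans hdiv
    simp only [mass, tsum_singleton (o, o)] at this
    rw [e1, e2]
    linarith
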